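/- arXiv:1503.03974 — 7 statements merged into one kernel-verified Lean document; each statement's English description precedes it below -/
import Mathlib

section
/- Let G = (V, A) be a finite directed graph without loops or parallel arcs, where every arc a = (u, v) carries a real weight w(u, v). Then G admits a feasible potential (a function p : V → ℝ such that w(u, v) − p(v) + p(u) ≥ 0 for every arc (u, v)) if and only if G is conservative (every directed cycle of G has nonnegative total weight). -/
/-!
Along a closed walk the potential differences telescope to zero, so the weight equals the reduced
weight. Conversely, if the graph is conservative, cutting closed walks out of a walk does not
increase its weight, so some walk without repeated nodes is lightest among all walks from a given
node `u`; there are only finitely many of these. The weights `d u` of these lightest walks satisfy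
`d u ≤ w u v + d v` on every arc `(u, v)`, so `-d` is a feasible potential.
-/

section Definitions

variable {V R : Type*}

/-- A feasible potential: a function on the nodes for which every arc has nonnegative reduced
weight. -/
def IsFeasiblePotential [AddGroup R] [LE R] (A : Set (V × V)) (w : V → V → R) (p : V → R) : Prop :=
  ∀ a ∈ A, 0 ≤ w a.1 a.2 - p a.2 + p a.1

/-- Conservative graphs: no directed cycle has negative weight. Cycles are encoded as cyclic
sequences of nodes, which may visit a node several times. -/
def IsConservative [AddCommMonoid R] [LE R] (A : Set (V × V)) (w : V → V → R) : Prop :=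
  ∀ (ℓ : ℕ) (c : ZMod (ℓ + 1) → V),
    (∀ i, (c i, c (i + 1)) ∈ A) → 0 ≤ ∑ i, w (c i) (c (i + 1))

/-- Directed walks: `IsWalk A u l` says that `u`, followed by the nodes of `l`, is a walk along arcs
in `A`. Keeping the first node apart from the list excludes the walk with no nodes. -/
def IsWalk (A : Set (V × V)) (u : V) (l : List V) : Prop :=
  (u :: l).IsChain fun x y => (x, y) ∈ A

/-- The total weight of the arcs traversed by the walk that starts at a node and then visits the
nodes of a list. -/
def walkWeight [AddMonoid R] (w : V → V → R) : V → List V → R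
  | _, [] => 0
  | u, v :: l => w u v + walkWeight w v l

end Definitions

section Walks

variable {V R : Type*}

lemma walkWeight_append_cons [AddMonoid R] (w : V → V → R) (u v : V) (s t : List V) :
    walkWeight w u (s ++ v :: t) = walkWeight w u (s ++ [v]) + walkWeight w v t := by
  induction s generalizing u with
  | nil => simp [walkWeight]
  | cons x s ih => simp [walkWeight, ih, add_assoc]

lemma walkWeight_eq_sum [AddCommMonoid R] (w : V → V → R) (u : V) (l : List V) :
    walkWeight w u l = ∑ i : Fin l.length, w (u :: l)[i] l[i] := by
  induction l generalizing u with
  | nil => rfl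
  | cons v l ih => simp [walkWeight, ih, Fin.sum_univ_succ]

lemma isWalk_append_cons {A : Set (V × V)} {u v : V} {s t : List V} :
    IsWalk A u (s ++ v :: t) ↔ IsWalk A u (s ++ [v]) ∧ IsWalk A v t := by
  simpa only [IsWalk, List.cons_append] using List.isChain_split (l₁ := u :: s)

lemma IsConservative.walkWeight_nonneg [AddCommMonoid R] [LE R] {A : Set (V × V)}
    {w : V → V → R} (hw : IsConservative A w) {u : V} {l : List V}
    (hl : IsWalk A u (l ++ [u])) : 0 ≤ walkWeight w u (l ++ [u]) := by
  -- `ZMod (n + 1)` is `Fin (n + 1)` by definition, which gives access to list indexing.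
  let c : ZMod (l.length + 1) → V := (u :: l).get
  have hlen : l.length + 1 = (l ++ [u]).length := by simp
  have hc (i : Fin (l.length + 1)) : c i = (u :: (l ++ [u]))[i] := by
    simp only [c, List.get_eq_getElem, Fin.getElem_fin, ← List.cons_append]
    exact (List.getElem_append_left i.isLt).symm
  have hc_succ (i : Fin (l.length + 1)) : c (i + 1 : Fin (l.length + 1)) = (l ++ [u])[i] := by
    cases i using Fin.lastCases with
    | last => simp [c]
    | cast i => simp [c]
  have hcA (i : Fin (l.length + 1)) : (c i, c (i + 1 : Fin (l.length + 1))) ∈ A := by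
    rw [hc, hc_succ]
    exact List.isChain_iff_getElem.mp hl i (by simp [i.is_le])
  have hsum : walkWeight w u (l ++ [u]) =
      ∑ i : Fin (l.length + 1), w (c i) (c (i + 1 : Fin (l.length + 1))) := by
    rw [walkWeight_eq_sum, ← Fin.sum_congr' _ hlen]
    exact Finset.sum_congr rfl fun i _ => by rw [hc, hc_succ]; rfl
  exact hsum ▸ hw l.length c hcA

end Walks

section OrderedWeights

variable {V R : Type*} {A : Set (V × V)} {w : V → V → R}

lemma IsFeasiblePotential.isConservative [AddCommGroup R] [Preorder R]
    [IsOrderedAddMonoid R] {p : V → R} (hp : IsFeasiblePotential A w p) :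
    IsConservative A w := by
  intro ℓ c hc
  have hshift : ∑ i, p (c (i + 1)) = ∑ i, p (c i) :=
    Equiv.sum_comp (Equiv.addRight 1) (p ∘ c)
  calc
    0 ≤ ∑ i, (w (c i) (c (i + 1)) - p (c (i + 1)) + p (c i)) :=
      Finset.sum_nonneg fun i _ => hp _ (hc i)
    _ = ∑ i, w (c i) (c (i + 1)) := by
      rw [Finset.sum_add_distrib, Finset.sum_sub_distrib, hshift, sub_add_cancel]

lemma IsConservative.exists_nodup_walkWeight_le [AddCommMonoid R] [Preorder R]
    [IsOrderedAddMonoid R] (hw : IsConservative A w) {u : V} {l : List V} (hl : IsWalk A u l) :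
    ∃ l', IsWalk A u l' ∧ (u :: l').Nodup ∧ walkWeight w u l' ≤ walkWeight w u l := by
  induction l generalizing u with
  | nil => exact ⟨[], hl, List.nodup_singleton u, le_rfl⟩
  | cons v l ih =>
    obtain ⟨huv, hvl⟩ := List.isChain_cons_cons.mp hl
    obtain ⟨l', hl', hnodup, hle⟩ := ih hvl
    have hwalk : IsWalk A u (v :: l') := List.isChain_cons_cons.mpr ⟨huv, hl'⟩
    have hweight : walkWeight w u (v :: l') ≤ walkWeight w u (v :: l) := by
      simpa only [walkWeight] using add_le_add_right hle (w u v)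
    by_cases hu : u ∈ v :: l'
    · obtain ⟨s, t, hst⟩ := List.append_of_mem hu
      rw [hst] at hwalk hnodup hweight
      obtain ⟨hclosed, ht⟩ := isWalk_append_cons.mp hwalk
      refine ⟨t, ht, hnodup.of_append_right, le_trans ?_ hweight⟩
      rw [walkWeight_append_cons]
      exact le_add_of_nonneg_left (hw.walkWeight_nonneg hclosed)
    · exact ⟨v :: l', hwalk, List.nodup_cons.mpr ⟨hu, hnodup⟩, hweight⟩

end OrderedWeights

section FiniteGraphs

variable {V R : Type*} [Finite V] {A : Set (V × V)} {w : V → V → R}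

lemma IsConservative.exists_lightest_walk [AddCommMonoid R] [LinearOrder R]
    [IsOrderedAddMonoid R] (hw : IsConservative A w) (u : V) :
    ∃ l, IsWalk A u l ∧ ∀ l', IsWalk A u l' → walkWeight w u l ≤ walkWeight w u l' := by
  classical
  have := Fintype.ofFinite V
  let paths : Set (List V) := {l | IsWalk A u l ∧ (u :: l).Nodup}
  have hfinite : paths.Finite :=
    (Set.finite_coe_iff.mp (Finite.of_fintype {l : List V // l.Nodup})).subset
      fun _ hl => hl.2.of_cons
  have hnil : [] ∈ paths := ⟨List.isChain_singleton u, List.nodup_singleton u⟩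
  obtain ⟨l, hl, hmin⟩ := Set.exists_min_image paths (walkWeight w u) hfinite ⟨[], hnil⟩
  refine ⟨l, hl.1, fun l' hl' => ?_⟩
  obtain ⟨l'', hwalk, hnodup, hle⟩ := hw.exists_nodup_walkWeight_le hl'
  exact (hmin l'' ⟨hwalk, hnodup⟩).trans hle

lemma IsConservative.exists_isFeasiblePotential [AddCommGroup R] [LinearOrder R]
    [IsOrderedAddMonoid R] (hw : IsConservative A w) :
    ∃ p, IsFeasiblePotential A w p := by
  choose l hl hmin using hw.exists_lightest_walk
  let d (u : V) : R := walkWeight w u (l u)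
  refine ⟨fun u => -d u, fun ⟨u, v⟩ huv => ?_⟩
  have hd : d u ≤ w u v + d v := hmin u (v :: l v) (List.isChain_cons_cons.mpr ⟨huv, hl v⟩)
  simpa only [sub_neg_eq_add, ← sub_eq_add_neg, sub_nonneg] using hd

end FiniteGraphs

theorem stmt_0_general {V R : Type*} [Finite V] [AddCommGroup R] [LinearOrder R]
    [IsOrderedAddMonoid R] (A : Set (V × V)) (w : V → V → R) :
    (∃ p, IsFeasiblePotential A w p) ↔ IsConservative A w :=
  ⟨fun ⟨_, hp⟩ => hp.isConservative, IsConservative.exists_isFeasiblePotential⟩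

/-- A finite weighted directed graph `(V, A, w)` without loops (and, by the
set-of-pairs encoding, without parallel arcs) admits a feasible potential
(`p : V → ℝ` with `w(u,v) - p(v) + p(u) ≥ 0` on every arc) iff it is
conservative: every directed cycle (encoded as a cyclic sequence
`c : ZMod (ℓ+1) → V` of nodes all of whose consecutive pairs are arcs) has
nonnegative total weight. -/
theorem stmt_0 {V : Type*} [Fintype V] (A : Set (V × V))
    (hloop : ∀ a ∈ A, a.1 ≠ a.2) (w : V → V → ℝ) :
    (∃ p : V → ℝ, ∀ a ∈ A, 0 ≤ w a.1 a.2 - p a.2 + p a.1) ↔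
    (∀ (ℓ : ℕ) (c : ZMod (ℓ + 1) → V),
      (∀ i, (c i, c (i + 1)) ∈ A) → 0 ≤ ∑ i, w (c i) (c (i + 1))) :=
  stmt_0_general A w
end

section
/- Let H = (V, A) be an integral-weighted HyTN (its hyperarcs may be standard arcs, multi-head hyperarcs, or multi-tail hyperarcs, all with integer weights). If H is consistent, then H admits an integral feasible scheduling s : V → {−T, −T+1, …, T−1, T}, where T is the sum over all hyperarcs A ∈ A and all their weighted endpoints v of |w_A(v)|. -/
/-!
Every hyperarc is a disjunction of difference constraints `s head ≤ s tail + w`, one for each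
weighted endpoint. Picking for each hyperarc a disjunct that holds for a given scheduling leaves a
plain system of difference constraints, and since its weights are integers, flooring the scheduling
preserves every constraint.

To bound an integral solution `s`, compress the integer line. Only the constraints with `w < 0` need
room: the unit steps `k → k + 1` with `s head ≤ k < s head - w` suffice for such a constraint. Let
`K` be the set of the steps kept in this way, and replace `s v` by the number of steps of `K` below
`s v`. Distances only shrink, which preserves the constraints with `0 ≤ w`, and the intervals kept
for the others do not shrink at all. The new values lie between `0` and `|K|`.
-/

/-- The position of `x` after compressing the integer line to the unit steps `k → k + 1` with
`k ∈ K`, each step being represented by its left endpoint. -/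
def countBelow (K : Finset ℤ) (x : ℤ) : ℤ := (K.filter (· < x)).card

section CountBelow

variable {K : Finset ℤ} {x y w : ℤ}

lemma countBelow_nonneg (K : Finset ℤ) (x : ℤ) : 0 ≤ countBelow K x :=
  Int.natCast_nonneg _

lemma countBelow_le_card (K : Finset ℤ) (x : ℤ) : countBelow K x ≤ K.card :=
  Nat.cast_le.mpr (Finset.card_filter_le K (· < x))

lemma countBelow_mono (K : Finset ℤ) : Monotone (countBelow K) := fun x y hxy => by
  have hsub : K.filter (· < x) ⊆ K.filter (· < y) :=
    Finset.monotone_filter_right K fun _ _ hk => hk.trans_le hxy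
  exact Nat.cast_le.mpr (Finset.card_le_card hsub)

lemma countBelow_eq_add_card_inter_Ico (K : Finset ℤ) (hxy : x ≤ y) :
    countBelow K y = countBelow K x + (K ∩ Finset.Ico x y).card := by
  have hdisj : Disjoint (K.filter (· < x)) (K ∩ Finset.Ico x y) := by
    simp only [Finset.disjoint_left, Finset.mem_filter, Finset.mem_inter, Finset.mem_Ico]
    omega
  have hunion : K.filter (· < y) = K.filter (· < x) ∪ K ∩ Finset.Ico x y := by
    ext k
    simp only [Finset.mem_filter, Finset.mem_union, Finset.mem_inter, Finset.mem_Ico]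
    grind
  simp only [countBelow, hunion, Finset.card_union_of_disjoint hdisj, Nat.cast_add]

lemma countBelow_le_add_of_nonneg (K : Finset ℤ) (hw : 0 ≤ w) (h : y ≤ x + w) :
    countBelow K y ≤ countBelow K x + w := by
  have hcard : (K ∩ Finset.Ico x (x + w)).card ≤ (x + w - x).toNat :=
    (Finset.card_le_card Finset.inter_subset_right).trans_eq (Int.card_Ico _ _)
  calc countBelow K y
      ≤ countBelow K (x + w) := countBelow_mono K h
    _ = countBelow K x + (K ∩ Finset.Ico x (x + w)).card :=
        countBelow_eq_add_card_inter_Ico K (by omega)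
    _ ≤ countBelow K x + w := by omega

lemma countBelow_le_add_of_Ico_subset (hw : w ≤ 0) (hK : Finset.Ico y (y - w) ⊆ K)
    (h : y ≤ x + w) : countBelow K y ≤ countBelow K x + w := by
  have hgap : countBelow K (y - w) = countBelow K y - w := by
    rw [countBelow_eq_add_card_inter_Ico K (by omega : y ≤ y - w),
      Finset.inter_eq_right.mpr hK, Int.card_Ico]
    omega
  have hmono : countBelow K (y - w) ≤ countBelow K x := countBelow_mono K (by omega)
  omega

end CountBelow

section DifferenceConstraints

variable {V J : Type*} [Fintype J]

/-- The unit steps, represented by their left endpoints, that a compression of the integer line has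
to keep in order to preserve the constraints `s (head j) ≤ s (tail j) + w j` with `w j < 0`; the
interval of `j` is empty when `0 ≤ w j`. -/
noncomputable def keptSteps (head : J → V) (w : J → ℤ) (s : V → ℤ) : Finset ℤ :=
  Finset.univ.biUnion fun j => Finset.Ico (s (head j)) (s (head j) - w j)

lemma card_keptSteps_le (head : J → V) (w : J → ℤ) (s : V → ℤ) :
    ((keptSteps head w s).card : ℤ) ≤ ∑ j, (w j)⁻ := by
  have hcard (j : J) : ((Finset.Ico (s (head j)) (s (head j) - w j)).card : ℤ) = (w j)⁻ := by
    rw [Int.card_Ico, sub_sub_cancel_left, Int.toNat_eq_max, negPart_def]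
  calc ((keptSteps head w s).card : ℤ)
      ≤ ∑ j, ((Finset.Ico (s (head j)) (s (head j) - w j)).card : ℤ) := by
        exact_mod_cast Finset.card_biUnion_le
    _ = ∑ j, (w j)⁻ := Finset.sum_congr rfl fun j _ => hcard j

lemma exists_solution_mem_Icc (tail head : J → V) (w : J → ℤ) (s : V → ℤ)
    (hs : ∀ j, s (head j) ≤ s (tail j) + w j) :
    ∃ s' : V → ℤ, (∀ j, s' (head j) ≤ s' (tail j) + w j) ∧
      ∀ v, s' v ∈ Set.Icc 0 (∑ j, (w j)⁻) := by
  let K := keptSteps head w s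
  refine ⟨fun v => countBelow K (s v), fun j => ?_, fun v =>
    ⟨countBelow_nonneg _ _, (countBelow_le_card _ _).trans (card_keptSteps_le head w s)⟩⟩
  rcases le_total 0 (w j) with hw | hw
  · exact countBelow_le_add_of_nonneg K hw (hs j)
  · have hK : Finset.Ico (s (head j)) (s (head j) - w j) ⊆ K :=
      Finset.subset_biUnion_of_mem (fun j => Finset.Ico (s (head j)) (s (head j) - w j))
        (Finset.mem_univ j)
    exact countBelow_le_add_of_Ico_subset hw hK (hs j)

variable {R : Type*} [Ring R] [LinearOrder R] [IsOrderedRing R] [FloorRing R]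

lemma floor_le_floor_add_of_le_add_intCast {x y : R} {n : ℤ} (h : x ≤ y + n) :
    ⌊x⌋ ≤ ⌊y⌋ + n :=
  (Int.floor_le_floor h).trans_eq (Int.floor_add_intCast y n)

lemma exists_int_solution_mem_Icc_of_disjunctive {κ : Type*} (options : J → Finset κ)
    (tail head : J → κ → V) (w : J → κ → ℤ) (s : V → R)
    (hs : ∀ j, ∃ k ∈ options j, s (head j k) ≤ s (tail j k) + w j k) :
    ∃ s' : V → ℤ, (∀ j, ∃ k ∈ options j, s' (head j k) ≤ s' (tail j k) + w j k) ∧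
      ∀ v, s' v ∈ Set.Icc 0 (∑ j, ∑ k ∈ options j, (w j k)⁻) := by
  choose k hk hsk using hs
  obtain ⟨s', hs', hbound⟩ := exists_solution_mem_Icc (fun j => tail j (k j))
    (fun j => head j (k j)) (fun j => w j (k j)) (fun v => ⌊s v⌋)
    fun j => floor_le_floor_add_of_le_add_intCast (hsk j)
  have hsum : ∑ j, (w j (k j))⁻ ≤ ∑ j, ∑ k ∈ options j, (w j k)⁻ :=
    Finset.sum_le_sum fun j _ =>
      Finset.single_le_sum (f := fun k => (w j k)⁻) (fun _ _ => negPart_nonneg _) (hk j)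
  exact ⟨s', fun j => ⟨k j, hk j, hs' j⟩, fun v => Set.Icc_subset_Icc_right hsum (hbound v)⟩

end DifferenceConstraints

theorem stmt_3_general {V ιS ιH ιT R : Type*} [Fintype ιS] [Fintype ιH] [Fintype ιT]
    [Ring R] [LinearOrder R] [IsOrderedRing R] [FloorRing R]
    (tailS headS : ιS → V) (wS : ιS → ℤ)
    (tailH : ιH → V) (headsH : ιH → Finset V) (wH : ιH → V → ℤ)
    (headT : ιT → V) (tailsT : ιT → Finset V) (wT : ιT → V → ℤ)
    (hHne : ∀ i, (headsH i).Nonempty) (hTne : ∀ i, (tailsT i).Nonempty)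
    (hcons : ∃ s : V → R,
      (∀ i, s (headS i) - s (tailS i) ≤ (wS i : R)) ∧
      (∀ i, (headsH i).inf' (hHne i) (fun v => s v - (wH i v : R)) ≤ s (tailH i)) ∧
      (∀ i, s (headT i) ≤ (tailsT i).sup' (hTne i) (fun v => s v + (wT i v : R)))) :
    ∃ s : V → ℤ,
      ((∀ i, s (headS i) - s (tailS i) ≤ wS i) ∧
       (∀ i, (headsH i).inf' (hHne i) (fun v => s v - wH i v) ≤ s (tailH i)) ∧
       (∀ i, s (headT i) ≤ (tailsT i).sup' (hTne i) (fun v => s v + wT i v))) ∧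
      (∀ v, s v ∈ Set.Icc 0 ((∑ i, (wS i)⁻) + (∑ i, ∑ v ∈ headsH i, (wH i v)⁻)
        + (∑ i, ∑ v ∈ tailsT i, (wT i v)⁻))) := by
  simp only [Finset.inf'_le_iff, Finset.le_sup'_iff, sub_le_iff_le_add] at hcons ⊢
  obtain ⟨s, hs⟩ := hcons
  obtain ⟨s', hs', hbound⟩ := exists_int_solution_mem_Icc_of_disjunctive
    (Sum.elim (fun i => {headS i}) (Sum.elim headsH tailsT))
    (Sum.elim (fun i _ => tailS i) (Sum.elim (fun i _ => tailH i) fun _ v => v))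
    (Sum.elim (fun _ v => v) (Sum.elim (fun _ v => v) fun i _ => headT i))
    (Sum.elim (fun i _ => wS i) (Sum.elim wH wT)) s
    (by simpa [Sum.forall, add_comm] using hs)
  refine ⟨s', ?_, ?_⟩
  · simpa [Sum.forall, add_comm] using hs'
  · simpa [Fintype.sum_sum_type, add_assoc] using hbound

/-- An integral-weighted HyTN `H = (V, A)` whose hyperarcs are standard arcs
(indexed by `ιS`), multi-head hyperarcs (indexed by `ιH`) and multi-tail
hyperarcs (indexed by `ιT`), if consistent (it admits a real feasible
scheduling), admits an integral feasible scheduling `s : V → ℤ` whose values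
all lie in `{-T, …, T}` where `T` is the sum of the absolute values of all
the weights of `H`. -/
theorem stmt_3 {V ιS ιH ιT : Type*} [Fintype V] [Fintype ιS] [Fintype ιH] [Fintype ιT]
    (tailS headS : ιS → V) (wS : ιS → ℤ)
    (tailH : ιH → V) (headsH : ιH → Finset V) (wH : ιH → V → ℤ)
    (headT : ιT → V) (tailsT : ιT → Finset V) (wT : ιT → V → ℤ)
    (hSne : ∀ i, tailS i ≠ headS i)
    (hHne : ∀ i, (headsH i).Nonempty) (hHt : ∀ i, tailH i ∉ headsH i)
    (hTne : ∀ i, (tailsT i).Nonempty) (hTt : ∀ i, headT i ∉ tailsT i)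
    (hcons : ∃ s : V → ℝ,
      (∀ i, s (headS i) - s (tailS i) ≤ (wS i : ℝ)) ∧
      (∀ i, (headsH i).inf' (hHne i) (fun v => s v - (wH i v : ℝ)) ≤ s (tailH i)) ∧
      (∀ i, s (headT i) ≤ (tailsT i).sup' (hTne i) (fun v => s v + (wT i v : ℝ)))) :
    ∃ s : V → ℤ,
      ((∀ i, s (headS i) - s (tailS i) ≤ wS i) ∧
       (∀ i, (headsH i).inf' (hHne i) (fun v => s v - wH i v) ≤ s (tailH i)) ∧
       (∀ i, s (headT i) ≤ (tailsT i).sup' (hTne i) (fun v => s v + wT i v))) ∧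
      (∀ v, |s v| ≤ (∑ i, |wS i|) + (∑ i, ∑ v ∈ headsH i, |wH i v|)
        + (∑ i, ∑ v ∈ tailsT i, |wT i v|)) := by
  obtain ⟨s, hs, hbound⟩ := stmt_3_general tailS headS wS tailH headsH wH headT tailsT wT
    hHne hTne hcons
  exact ⟨s, hs, fun v => (abs_of_nonneg (hbound v).1).trans_le <| (hbound v).2.trans <| by
    gcongr <;> exact sup_le (neg_le_abs _) (abs_nonneg _)⟩
end

section
/- Let φ = ⋀_{i=1}^m (α_i ∨ β_i ∨ γ_i) be a boolean 3-CNF formula over variables x_1, …, x_n, where each literal is some x_j or its negation. Let H_φ = (V, A) be the HyTN with nodes V = {z} ∪ {x_i, x̄_i : 1 ≤ i ≤ n} ∪ {C_j : 1 ≤ j ≤ m} and hyperarcs: for each variable i, the standard arcs (z, x_i, 1), (x_i, z, 0), (z, x̄_i, 1), (x̄_i, z, 0), the multi-tail hyperarc with tails {x_i, x̄_i}, head z and both weights −1, and the multi-head hyperarc with tail z, heads {x_i, x̄_i} and both weights 0; and for each clause j, the standard arcs (z, C_j, 1), (C_j, z, −1) and the multi-tail hyperarc with tails {α_j, β_j,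 γ_j} (the nodes of its three literals), head C_j and all weights 0. Then φ is satisfiable if and only if H_φ is consistent. -/
/-- The node set of the HyTN `H_φ` associated to a 3-CNF formula `φ` with `n`
variables and `m` clauses: the reference node `z`, a node `pos i` for each
variable `x_i`, a node `neg i` for its negation `x̄_i`, and a node `cl j` for
each clause `C_j`. -/
inductive SatNode (n m : ℕ) : Type where
  | z : SatNode n m
  | pos (i : Fin n) : SatNode n m
  | neg (i : Fin n) : SatNode n m
  | cl (j : Fin m) : SatNode n m

/-- The node representing a literal: the pair `(i, b)` stands for `x_i` when
`b = true` and for `x̄_i` when `b = false`. -/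
def litNode {n m : ℕ} (l : Fin n × Bool) : SatNode n m :=
  if l.2 then .pos l.1 else .neg l.1

/-!
The gadget of a variable leaves exactly two possibilities: one of `x_i`, `x̄_i` is scheduled at
time `s z` and the other at time `s z + 1`. So the schedulings satisfying all variable gadgets are,
up to the choice of `s z`, the same thing as truth assignments, true literals being those at time
`s z + 1`. The gadget of a clause puts the clause node at time `s z + 1` and asks that one of its
literals be at least as late, which is to say true.
-/

section Gadgets

variable {R : Type*} [Ring R] [LinearOrder R]

/-- The hyperarcs of the gadget of a variable `x_i`, where `z`, `a` and `b` are the times at which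
the nodes `z`, `x_i` and `x̄_i` are scheduled. -/
def VariableGadget (z a b : R) : Prop :=
  a - z ≤ 1 ∧ z - a ≤ 0 ∧ b - z ≤ 1 ∧ z - b ≤ 0 ∧ z ≤ max (a + -1) (b + -1) ∧ min a b ≤ z

/-- The hyperarcs of the gadget of a clause, where `z` and `c` are the times of the node `z` and of
the clause node, and `t` is the time of the latest literal of the clause. -/
def ClauseGadget (z c t : R) : Prop :=
  c - z ≤ 1 ∧ z - c ≤ -1 ∧ c ≤ t

variable [IsStrictOrderedRing R]

theorem variableGadget_iff {z a b : R} :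
    VariableGadget z a b ↔ a = z + 1 ∧ b = z ∨ a = z ∧ b = z + 1 := by
  constructor
  · rintro ⟨ha_le, hz_le_a, hb_le, hz_le_b, hmax, hmin⟩
    have hlate : a = z + 1 ∨ b = z + 1 := by
      rw [le_max_iff] at hmax
      grind
    have hearly : a = z ∨ b = z := by
      rw [min_le_iff] at hmin
      grind
    have hne : z + 1 ≠ z := (lt_add_one z).ne'
    grind
  · rintro (⟨rfl, rfl⟩ | ⟨rfl, rfl⟩) <;> simp [VariableGadget]

theorem clauseGadget_iff {z c t : R} : ClauseGadget z c t ↔ c = z + 1 ∧ z + 1 ≤ t := by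
  constructor
  · rintro ⟨hc_le, hz_le, ht⟩
    have hc : c = z + 1 := by grind
    exact ⟨hc, hc ▸ ht⟩
  · rintro ⟨rfl, ht⟩
    exact ⟨by simp, by simp, ht⟩

end Gadgets

section Assignments

variable {V R : Type*} [Ring R]

/-- The times of the literals encoding the truth assignment `ν` when the node `z` is scheduled at
time `z`; the literal `(i, b)` is true under `ν` when `ν i = b`. -/
def literalTime (z : R) (ν : V → Bool) (l : V × Bool) : R :=
  if ν l.1 = l.2 then z + 1 else z

variable [LinearOrder R] [IsStrictOrderedRing R]

theorem add_one_le_literalTime_iff {z : R} {ν : V → Bool} {l : V × Bool} :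
    z + 1 ≤ literalTime z ν l ↔ ν l.1 = l.2 := by
  by_cases h : ν l.1 = l.2 <;> simp [literalTime, h]

theorem variableGadget_literalTime (z : R) (ν : V → Bool) (i : V) :
    VariableGadget z (literalTime z ν (i, true)) (literalTime z ν (i, false)) := by
  cases h : ν i <;> simp [variableGadget_iff, literalTime, h]

theorem forall_variableGadget_iff_exists_literalTime {z : R} {x : V × Bool → R} :
    (∀ i, VariableGadget z (x (i, true)) (x (i, false))) ↔ ∃ ν, x = literalTime z ν := by
  refine ⟨fun h ↦ ?_, ?_⟩
  · have hν (i : V) : ∃ b, x (i, b) = z + 1 ∧ x (i, !b) = z := by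
      rcases variableGadget_iff.mp (h i) with ⟨hpos, hneg⟩ | ⟨hpos, hneg⟩
      · exact ⟨true, hpos, hneg⟩
      · exact ⟨false, hneg, hpos⟩
    choose ν htrue hfalse using hν
    refine ⟨ν, funext fun ⟨i, b⟩ ↦ ?_⟩
    obtain rfl | rfl : b = ν i ∨ b = !ν i := by cases b <;> cases ν i <;> simp
    · simp [literalTime, htrue]
    · simp [literalTime, hfalse]
  · rintro ⟨ν, rfl⟩ i
    exact variableGadget_literalTime z ν i

theorem clauseGadget_literalTime_iff {z c : R} {ν : V → Bool} {K : Finset (V × Bool)}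
    (hK : K.Nonempty) :
    ClauseGadget z c (K.sup' hK (literalTime z ν)) ↔ c = z + 1 ∧ ∃ l ∈ K, ν l.1 = l.2 := by
  simp only [clauseGadget_iff, Finset.le_sup'_iff, add_one_le_literalTime_iff]

end Assignments

/-- A scheduling of `H_φ` is encoded as the time `z` of the node `z`, the times `x` of the literals
and the times `c` of the clause nodes. -/
theorem stmt_4_general {V C R : Type*} [Ring R] [LinearOrder R] [IsStrictOrderedRing R]
    (clause : C → Finset (V × Bool)) (hclause : ∀ j, (clause j).Nonempty) :
    (∃ ν : V → Bool, ∀ j, ∃ l ∈ clause j, ν l.1 = l.2) ↔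
    ∃ (z : R) (x : V × Bool → R) (c : C → R),
      (∀ i, VariableGadget z (x (i, true)) (x (i, false))) ∧
      ∀ j, ClauseGadget z (c j) ((clause j).sup' (hclause j) x) := by
  simp only [forall_variableGadget_iff_exists_literalTime]
  constructor
  · rintro ⟨ν, hν⟩
    exact ⟨0, literalTime 0 ν, fun _ ↦ 0 + 1, ⟨ν, rfl⟩,
      fun j ↦ (clauseGadget_literalTime_iff (hclause j)).mpr ⟨rfl, hν j⟩⟩
  · rintro ⟨z, _, c, ⟨ν, rfl⟩, hc⟩
    exact ⟨ν, fun j ↦ ((clauseGadget_literalTime_iff (hclause j)).mp (hc j)).2⟩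

theorem exists_satNode_scheduling_iff {n m : ℕ} {T : Type*}
    {P : T → (Fin n × Bool → T) → (Fin m → T) → Prop} :
    (∃ s : SatNode n m → T, P (s .z) (s ∘ litNode) (s ∘ .cl)) ↔ ∃ z x c, P z x c := by
  refine ⟨fun ⟨s, hs⟩ ↦ ⟨_, _, _, hs⟩, fun ⟨z, x, c, h⟩ ↦ ?_⟩
  let s : SatNode n m → T
    | .z => z
    | .pos i => x (i, true)
    | .neg i => x (i, false)
    | .cl j => c j
  have hlit : s ∘ litNode = x := by
    ext ⟨i, b⟩
    cases b <;> rfl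
  exact ⟨s, hlit.symm ▸ h⟩

/-- A 3-CNF formula `φ = ⋀_j (α_j ∨ β_j ∨ γ_j)` (each clause being a triple of
literals, a literal `(i,b)` being satisfied by `ν` when `ν i = b`) is
satisfiable iff the HyTN `H_φ` is consistent.  The constraints of `H_φ` are:
for each variable `i` the standard arcs `(z, x_i, 1)`, `(x_i, z, 0)`,
`(z, x̄_i, 1)`, `(x̄_i, z, 0)`, the multi-tail hyperarc with tails
`{x_i, x̄_i}`, head `z` and weights `-1` (imposing
`s z ≤ max (s x_i - 1) (s x̄_i - 1)`), and the multi-head hyperarc with tail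
`z`, heads `{x_i, x̄_i}` and weights `0` (imposing
`s z ≥ min (s x_i) (s x̄_i)`); and for each clause `j` the standard arcs
`(z, C_j, 1)`, `(C_j, z, -1)` and the multi-tail hyperarc with tails the
nodes of its three literals, head `C_j` and weights `0`. -/
theorem stmt_4 {n m : ℕ} (hn : 1 ≤ n) (hm : 1 ≤ m)
    (clause : Fin m → (Fin n × Bool) × (Fin n × Bool) × (Fin n × Bool)) :
    (∃ ν : Fin n → Bool, ∀ j,
        ν (clause j).1.1 = (clause j).1.2 ∨
        ν (clause j).2.1.1 = (clause j).2.1.2 ∨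
        ν (clause j).2.2.1 = (clause j).2.2.2) ↔
    (∃ s : SatNode n m → ℝ,
      (∀ i : Fin n,
        s (.pos i) - s .z ≤ 1 ∧ s .z - s (.pos i) ≤ 0 ∧
        s (.neg i) - s .z ≤ 1 ∧ s .z - s (.neg i) ≤ 0 ∧
        s .z ≤ max (s (.pos i) + (-1)) (s (.neg i) + (-1)) ∧
        min (s (.pos i) - 0) (s (.neg i) - 0) ≤ s .z) ∧
      (∀ j : Fin m,
        s (.cl j) - s .z ≤ 1 ∧ s .z - s (.cl j) ≤ -1 ∧
        s (.cl j) ≤ max (s (litNode (clause j).1) + 0)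
          (max (s (litNode (clause j).2.1) + 0)
            (s (litNode (clause j).2.2) + 0)))) := by
  simpa [VariableGadget, ClauseGadget, litNode] using
    (stmt_4_general (R := ℝ) (fun j ↦ {(clause j).1, (clause j).2.1, (clause j).2.2})
      (fun j ↦ Finset.insert_nonempty _ _)).trans exists_satNode_scheduling_iff.symm
end

section
/- A multi-head HyTN that contains a negative cycle admits no feasible scheduling. -/
/-!
Under a feasible scheduling `s`, every node `x` of the cycle has a head `y` of its hyperarc `a x`
with `s y - s x ≤ w (a x) y`. Following such heads inside the finite set `S` eventually closes up
into a finite cyclic sequence; along it the left-hand sides telescope to `0`, so its weight is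
nonnegative.
-/

open Finset Function

/-- The sequence `v 0, …, v p` is a simple closed walk of length `p` in the directed graph `r`: this
is a finite cyclic sequence of a cycle `(S, C)` when `r x y` says that `y` is a head of the hyperarc
chosen at `x`. The values of `v` beyond `p` are unconstrained. -/
structure IsCyclicSequence {α : Type*} (r : α → α → Prop) (p : ℕ) (v : ℕ → α) : Prop where
  pos : 0 < p
  rel : ∀ t < p, r (v t) (v (t + 1))
  closed : v p = v 0
  injOn : Set.InjOn v (Set.Iio p)

theorem IsCyclicSequence.map {α β : Type*} {r : α → α → Prop} {r' : β → β → Prop} {p : ℕ}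
    {v : ℕ → α} (h : IsCyclicSequence r p v) {g : α → β} (hg : Injective g)
    (hr : ∀ x y, r x y → r' (g x) (g y)) : IsCyclicSequence r' p (g ∘ v) where
  pos := h.pos
  rel t ht := hr _ _ (h.rel t ht)
  closed := congrArg g h.closed
  injOn := hg.comp_injOn h.injOn

theorem periodicPts_nonempty_of_finite {α : Type*} [Finite α] [Nonempty α] (f : α → α) :
    (periodicPts f).Nonempty := by
  obtain ⟨x⟩ := ‹Nonempty α›
  obtain ⟨m, n, hmn, heq⟩ := Set.finite_univ.exists_lt_map_eq_of_forall_mem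
    (f := (f^[·] x)) fun _ => Set.mem_univ _
  have hper : f^[n - m] (f^[m] x) = f^[m] x := by
    rw [← iterate_add_apply, Nat.sub_add_cancel hmn.le, heq]
  exact ⟨f^[m] x, mk_mem_periodicPts (Nat.sub_pos_of_lt hmn) hper⟩

theorem isCyclicSequence_iterate {α : Type*} {r : α → α → Prop} {f : α → α}
    (hf : ∀ x, r x (f x)) {x : α} (hx : x ∈ periodicPts f) :
    IsCyclicSequence r (minimalPeriod f x) (f^[·] x) where
  pos := minimalPeriod_pos_of_mem_periodicPts hx
  rel t _ := by simpa only [iterate_succ_apply'] using hf (f^[t] x)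
  closed := iterate_minimalPeriod
  injOn := iterate_injOn_Iio_minimalPeriod

theorem exists_isCyclicSequence {α : Type*} [Finite α] [Nonempty α] {r : α → α → Prop}
    (hr : Relator.LeftTotal r) : ∃ p v, IsCyclicSequence r p v := by
  choose f hf using hr
  obtain ⟨x, hx⟩ := periodicPts_nonempty_of_finite f
  exact ⟨_, _, isCyclicSequence_iterate hf hx⟩

theorem sub_le_sum_range_of_sub_le {G : Type*} [AddCommGroup G] [PartialOrder G]
    [IsOrderedAddMonoid G] {x c : ℕ → G} {n : ℕ} (h : ∀ t < n, x (t + 1) - x t ≤ c t) :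
    x n - x 0 ≤ ∑ t ∈ range n, c t :=
  calc
    x n - x 0 = ∑ t ∈ range n, (x (t + 1) - x t) := (sum_range_sub x n).symm
    _ ≤ ∑ t ∈ range n, c t := sum_le_sum fun t ht => h t (mem_range.mp ht)

theorem IsCyclicSequence.sum_nonneg_of_sub_le {α G : Type*} [AddCommGroup G] [PartialOrder G]
    [IsOrderedAddMonoid G] {r : α → α → Prop} {p : ℕ} {v : ℕ → α} (h : IsCyclicSequence r p v)
    {c : α → α → G} (s : α → G) (hs : ∀ x y, r x y → s y - s x ≤ c x y) :
    0 ≤ ∑ t ∈ range p, c (v t) (v (t + 1)) :=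
  calc
    0 = s (v p) - s (v 0) := by rw [h.closed, sub_self]
    _ ≤ ∑ t ∈ range p, c (v t) (v (t + 1)) :=
      sub_le_sum_range_of_sub_le (x := s ∘ v) fun t ht => hs _ _ (h.rel t ht)

theorem stmt_6_general {V ι G : Type*} [AddCommGroup G] [LinearOrder G] [IsOrderedAddMonoid G]
    (tail : ι → V) (heads : ι → Finset V) (w : ι → V → G) (hne : ∀ i, (heads i).Nonempty)
    (S : Set V) (a : V → ι) (hSfin : S.Finite) (hSne : S.Nonempty)
    (htail : ∀ v ∈ S, tail (a v) = v) (hheads : ∀ v ∈ S, ∀ u ∈ heads (a v), u ∈ S)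
    (hneg : ∀ (p : ℕ) (v : ℕ → V), v 0 ∈ S → IsCyclicSequence (fun x y => y ∈ heads (a x)) p v →
      ∑ t ∈ range p, w (a (v t)) (v (t + 1)) < 0) :
    ¬ ∃ s : V → G, ∀ i, (heads i).inf' (hne i) (fun u => s u - w i u) ≤ s (tail i) := by
  rintro ⟨s, hs⟩
  have : Finite S := hSfin
  have : Nonempty S := hSne.to_subtype
  have htotal : Relator.LeftTotal
      fun x y : S => y.1 ∈ heads (a x) ∧ s y - s x ≤ w (a x) y := by
    rintro ⟨x, hx⟩
    obtain ⟨y, hy, hle⟩ := (inf'_le_iff (hne (a x))).mp (hs (a x))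
    rw [htail x hx] at hle
    exact ⟨⟨y, hheads x hx y hy⟩, hy, sub_le_comm.mp hle⟩
  obtain ⟨p, v, hv⟩ := exists_isCyclicSequence htotal
  have hneg_sum := hneg p _ (v 0).2 (hv.map Subtype.val_injective fun _ _ h => h.1)
  have hsum_nonneg : 0 ≤ ∑ t ∈ range p, w (a (v t)) (v (t + 1)) :=
    hv.sum_nonneg_of_sub_le (c := fun x y => w (a x) y) (fun x : S => s x) fun _ _ h => h.2
  exact hneg_sum.not_ge hsum_nonneg

/-- A multi-head HyTN (hyperarcs indexed by `ι`, each with tail `tail i`,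
nonempty head set `heads i` not containing the tail, and weights `w i`) that
contains a negative cycle admits no feasible scheduling.  A cycle is a pair
`(S, C)` (with the tail-selection function `a` witnessing that every `v ∈ S`
is the tail of exactly one hyperarc `a v ∈ C`) such that `S` is nonempty and
equals the union of `{tail i} ∪ heads i` over `i ∈ C`; it is negative when
every finite cyclic sequence `v 0, v 1, …, v p` (with `v (t+1)` a head of the
hyperarc `a (v t)`, `v p = v 0`, and no other repetition) has total weight
`∑_{t<p} w (a (v t)) (v (t+1)) < 0`. -/
theorem stmt_6 {V ι : Type*} [Fintype V] [Fintype ι]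
    (tail : ι → V) (heads : ι → Finset V) (w : ι → V → ℝ)
    (hne : ∀ i, (heads i).Nonempty) (hnt : ∀ i, tail i ∉ heads i)
    (S : Set V) (C : Set ι) (a : V → ι)
    (hSne : S.Nonempty)
    (hS : ∀ v : V, v ∈ S ↔ ∃ i ∈ C, v = tail i ∨ v ∈ heads i)
    (ha : ∀ v ∈ S, a v ∈ C ∧ tail (a v) = v)
    (hauniq : ∀ i ∈ C, a (tail i) = i)
    (hneg : ∀ (p : ℕ) (v : ℕ → V), 1 ≤ p → v 0 ∈ S →
      (∀ t < p, v (t + 1) ∈ heads (a (v t))) → v p = v 0 →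
      (∀ t < p, ∀ t' < p, v t = v t' → t = t') →
      ∑ t ∈ Finset.range p, w (a (v t)) (v (t + 1)) < 0) :
    ¬ ∃ s : V → ℝ, ∀ i, (heads i).inf' (hne i) (fun u => s u - w i u) ≤ s (tail i) :=
  stmt_6_general tail heads w hne S a S.toFinite hSne (fun v hv => (ha v hv).2)
    (fun v hv u hu => (hS u).2 ⟨a v, (ha v hv).1, Or.inr hu⟩)
    fun p v hv h => hneg p v h.pos hv h.rel h.closed fun _ ht _ ht' => h.injOn ht ht'
end

section
/- A multi-head HyTN H = (V, A) in which every node is the tail of at least one hyperarc is consistent if and only if it is conservative, i.e., if and only if it contains no negative cycle. -/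
/-!
Call a hyperarc satisfied by `s` when one of its heads `u` has `s u - w u ≤ s (tail)`.

Network with at most one hyperarc per node: a schedule on a maximal set `D` of nodes, using only
heads in `D`, extends to any node that has a head in `D`, so the complement of `D` is closed under
heads. If it is nonempty, it is the node set of a cycle; should this cycle contain a cyclic sequence
of nonnegative weight, the partial sums of the weights would extend the schedule to that sequence.

General network: suppose `i ≠ j` are hyperarcs with the same tail `x`, and let `s₁`, `s₂` be
schedules for the networks without `i` and without `j`, translated so that `s₁ x = s₂ x`. Their
pointwise minimum is feasible for the whole network: a hyperarc with tail `t` is satisfied by it as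
soon as it is satisfied by a schedule that attains the minimum at `t`, and at `x` both do. Hence
an inconsistent network has an inconsistent subnetwork with at most one hyperarc per node.

Conversely, following satisfied heads inside a cycle closes up into a cyclic sequence, along which
the weights dominate increments of `s` that telescope to `0`.
-/

namespace HyTN

open Function Set

/-- A finite cyclic sequence `v 0, …, v p` of the digraph in which `N x` is the set of
out-neighbours of `x`. Only the values of `v` at `0, …, p` matter, and `v p = v 0` is the only
repetition. -/
structure IsCyclicSeq {V : Type*} (N : V → Set V) (p : ℕ) (v : ℕ → V) : Prop where
  pos : 1 ≤ p
  step : ∀ t < p, v (t + 1) ∈ N (v t)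
  closed : v p = v 0
  injOn : (Iio p).InjOn v

/-- The scheduling `s` meets the constraint of the hyperarc with tail `t`, head set `N` and
weights `w`. Written with `∃`, the constraint makes sense for every head set, and fails for the
empty one. -/
def Satisfies {V G : Type*} [Sub G] [LE G] (s : V → G) (t : V) (N : Set V) (w : V → G) : Prop :=
  ∃ u ∈ N, s u - w u ≤ s t

section CyclicSeq

variable {V : Type*} {N : V → Set V} {p : ℕ} {v : ℕ → V}

lemma IsCyclicSeq.mono {M : V → Set V} (hv : IsCyclicSeq N p v) (h : ∀ t < p, N (v t) ⊆ M (v t)) :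
    IsCyclicSeq M p v :=
  { hv with step := fun t ht => h t ht (hv.step t ht) }

lemma IsCyclicSeq.mem_of_closed {S : Set V} (hv : IsCyclicSeq N p v) (hS : ∀ x ∈ S, N x ⊆ S)
    (h0 : v 0 ∈ S) : ∀ t ≤ p, v t ∈ S := by
  intro t ht
  induction t with
  | zero => exact h0
  | succ t ih => exact hS _ (ih (by lia)) (hv.step t ht)

lemma IsCyclicSeq.succ_mem_image (hv : IsCyclicSeq N p v) {t : ℕ} (ht : t < p) :
    v (t + 1) ∈ v '' Iio p := by
  rcases (Nat.succ_le_of_lt ht).lt_or_eq with h | h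
  · exact mem_image_of_mem v h
  · exact ⟨0, hv.pos, by rw [← hv.closed, ← h]⟩

lemma exists_mem_periodicPts [Finite V] [Nonempty V] (f : V → V) : ∃ x, x ∈ periodicPts f := by
  obtain ⟨x₀⟩ := ‹Nonempty V›
  obtain ⟨m, n, hmn, h⟩ :=
    finite_univ.exists_lt_map_eq_of_forall_mem fun n : ℕ => mem_univ (f^[n] x₀)
  refine ⟨f^[m] x₀, mk_mem_periodicPts (Nat.sub_pos_of_lt hmn) ?_⟩
  rw [IsPeriodicPt, IsFixedPt, ← iterate_add_apply, Nat.sub_add_cancel hmn.le, h]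

lemma exists_isCyclicSeq [Finite V] {S : Set V} (hne : S.Nonempty)
    (hS : ∀ x ∈ S, (N x ∩ S).Nonempty) : ∃ p v, IsCyclicSeq N p v ∧ ∀ t, v t ∈ S := by
  have : Nonempty S := hne.to_subtype
  choose next hnext using hS
  let f : S → S := fun x => ⟨next x x.2, (hnext x x.2).2⟩
  obtain ⟨x, hx⟩ := exists_mem_periodicPts f
  refine ⟨minimalPeriod f x, fun t => f^[t] x,
    ⟨minimalPeriod_pos_of_mem_periodicPts hx, ?_, ?_, ?_⟩, fun t => (f^[t] x).2⟩
  · intro t _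
    rw [iterate_succ_apply']
    exact (hnext _ (f^[t] x).2).1
  · exact congrArg Subtype.val iterate_minimalPeriod
  · exact Subtype.val_injective.comp_injOn iterate_injOn_Iio_minimalPeriod

end CyclicSeq

section Potential

variable {V G : Type*} [AddCommGroup G] [PartialOrder G] [IsOrderedAddMonoid G]
  {N : V → Set V} {p : ℕ} {v : ℕ → V}

lemma sum_nonneg_of_closed {s : V → G} {a : ℕ → G} (hclosed : v p = v 0)
    (hs : ∀ t < p, s (v (t + 1)) - a t ≤ s (v t)) : 0 ≤ ∑ t ∈ Finset.range p, a t :=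
  calc 0 = ∑ t ∈ Finset.range p, (s (v (t + 1)) - s (v t)) := by
        rw [Finset.sum_range_sub (fun t => s (v t)), hclosed, sub_self]
    _ ≤ ∑ t ∈ Finset.range p, a t :=
        Finset.sum_le_sum fun t ht => sub_le_comm.1 (hs t (Finset.mem_range.1 ht))

lemma IsCyclicSeq.exists_potential (hv : IsCyclicSeq N p v) {a : ℕ → G}
    (ha : 0 ≤ ∑ t ∈ Finset.range p, a t) :
    ∃ s : V → G, ∀ t < p, s (v (t + 1)) - a t ≤ s (v t) := by
  let s : V → G := fun x => ∑ k ∈ Finset.range (invFunOn v (Iio p) x), a k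
  have hs : ∀ t < p, s (v t) = ∑ k ∈ Finset.range t, a k := fun t ht => by
    simp only [s, hv.injOn.leftInvOn_invFunOn (mem_Iio.2 ht)]
  have hs_succ : ∀ t < p, s (v (t + 1)) ≤ ∑ k ∈ Finset.range (t + 1), a k := by
    intro t ht
    rcases (Nat.succ_le_of_lt ht).lt_or_eq with h | rfl
    · exact (hs _ h).le
    · rwa [hv.closed, hs 0 hv.pos, Finset.sum_range_zero]
  refine ⟨s, fun t ht => ?_⟩
  rw [sub_le_iff_le_add, hs t ht, ← Finset.sum_range_succ]
  exact hs_succ t ht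

end Potential

section OneHyperarcPerNode

variable {V G : Type*} {T D : Set V} {N : V → Set V} {c : V → V → G} {s : V → G}

/-- The scheduling `s` restricts to a feasible one on `D`: each node of `D` that carries a
constraint (the nodes in `T` do) meets it through a head in `D`. -/
def FeasibleWithin [Sub G] [LE G] (T : Set V) (N : V → Set V) (c : V → V → G)
    (D : Set V) (s : V → G) : Prop :=
  ∀ x ∈ D, x ∈ T → Satisfies s x (N x ∩ D) (c x)

lemma FeasibleWithin.union [Sub G] [LE G] {E : Set V} {g : V → G} [∀ x, Decidable (x ∈ D)]
    (hs : FeasibleWithin T N c D s)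
    (hE : ∀ x ∈ E, x ∉ D → Satisfies (D.piecewise s g) x (N x ∩ (D ∪ E)) (c x)) :
    FeasibleWithin T N c (D ∪ E) (D.piecewise s g) := by
  intro x hx hxT
  by_cases hxD : x ∈ D
  · obtain ⟨u, ⟨hu, huD⟩, hle⟩ := hs x hxD hxT
    exact ⟨u, ⟨hu, Or.inl huD⟩, by simpa only [piecewise_eq_of_mem _ _ _, hxD, huD] using hle⟩
  · exact hE x (hx.resolve_left hxD) hxD

lemma FeasibleWithin.exists_union_singleton [Sub G] [Preorder G] {x u : V}
    (hs : FeasibleWithin T N c D s) (hx : x ∉ D) (huN : u ∈ N x) (huD : u ∈ D) :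
    ∃ s' : V → G, FeasibleWithin T N c (D ∪ {x}) s' := by
  classical
  refine ⟨_, hs.union (g := fun _ => s u - c x u) ?_⟩
  rintro y rfl -
  exact ⟨u, ⟨huN, Or.inl huD⟩, by simp [huD, hx]⟩

variable [AddCommGroup G] [PartialOrder G] [IsOrderedAddMonoid G]

lemma FeasibleWithin.exists_union_cyclicSeq {p : ℕ} {v : ℕ → V} (hs : FeasibleWithin T N c D s)
    (hv : IsCyclicSeq N p v) (hvD : ∀ t ≤ p, v t ∉ D)
    (hsum : 0 ≤ ∑ t ∈ Finset.range p, c (v t) (v (t + 1))) :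
    ∃ s' : V → G, FeasibleWithin T N c (D ∪ v '' Iio p) s' := by
  classical
  obtain ⟨g, hg⟩ := hv.exists_potential hsum
  refine ⟨_, hs.union (g := g) ?_⟩
  rintro _ ⟨t, ht, rfl⟩ -
  refine ⟨v (t + 1), ⟨hv.step t ht, Or.inr (hv.succ_mem_image ht)⟩, ?_⟩
  rw [piecewise_eq_of_notMem _ _ _ (hvD _ (Nat.succ_le_of_lt ht)),
    piecewise_eq_of_notMem _ _ _ (hvD _ (le_of_lt ht))]
  exact hg t ht

lemma exists_isCyclicSeq_of_satisfies [Finite V] {S : Set V}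
    (hs : ∀ x ∈ S, Satisfies s x (N x) (c x)) (hne : S.Nonempty) (hS : ∀ x ∈ S, N x ⊆ S) :
    ∃ p v, IsCyclicSeq N p v ∧ v 0 ∈ S ∧ 0 ≤ ∑ t ∈ Finset.range p, c (v t) (v (t + 1)) := by
  obtain ⟨p, v, hv, hvS⟩ := exists_isCyclicSeq (N := fun x => {u ∈ N x | s u - c x u ≤ s x}) hne
    fun x hx => (hs x hx).imp fun u hu => ⟨hu, hS x hx hu.1⟩
  exact ⟨p, v, hv.mono fun _ _ => sep_subset _ _, hvS 0,
    sum_nonneg_of_closed hv.closed fun t ht => (hv.step t ht).2⟩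

lemma exists_satisfies_of_exists_isCyclicSeq [Finite V]
    (hcyc : ∀ S ⊆ T, S.Nonempty → (∀ x ∈ S, N x ⊆ S) →
      ∃ p v, IsCyclicSeq N p v ∧ v 0 ∈ S ∧ 0 ≤ ∑ t ∈ Finset.range p, c (v t) (v (t + 1))) :
    ∃ s : V → G, ∀ x ∈ T, Satisfies s x (N x) (c x) := by
  obtain ⟨D, hTD, ⟨s, hs⟩, hmax⟩ := Finite.exists_le_maximal
    (p := fun D => ∃ s : V → G, FeasibleWithin T N c D s) (a := Tᶜ)
    ⟨0, fun x hx hxT => (hx hxT).elim⟩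
  have hclosed : ∀ x ∈ Dᶜ, N x ⊆ Dᶜ := fun x hx u hu huD =>
    hx (hmax (hs.exists_union_singleton hx hu huD) subset_union_left (Or.inr rfl))
  have hD : D = univ := by
    by_contra hD
    obtain ⟨p, v, hv, hv0, hsum⟩ :=
      hcyc Dᶜ (compl_subset_comm.1 hTD) (nonempty_compl.2 hD) hclosed
    exact hv0 (hmax (hs.exists_union_cyclicSeq hv (hv.mem_of_closed hclosed hv0) hsum)
      subset_union_left (Or.inr ⟨0, hv.pos, rfl⟩))
  refine ⟨s, fun x hx => ?_⟩
  simpa only [hD, inter_univ] using hs x (hD ▸ mem_univ x) hx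

end OneHyperarcPerNode

section SharedTails

lemma Satisfies.sub_const {V G : Type*} [AddCommGroup G] [PartialOrder G] [IsOrderedAddMonoid G]
    {s : V → G} {t : V} {N : Set V} {w : V → G} (hs : Satisfies s t N w) (b : G) :
    Satisfies (fun x => s x - b) t N w := by
  obtain ⟨u, hu, hle⟩ := hs
  exact ⟨u, hu, by rw [sub_right_comm]; exact sub_le_sub_right hle b⟩

lemma Satisfies.inf_of_le {V G : Type*} [AddCommGroup G] [Lattice G] [IsOrderedAddMonoid G]
    {s s' : V → G} {t : V} {N : Set V} {w : V → G} (hs : Satisfies s t N w) (hle : s t ≤ s' t) :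
    Satisfies (s ⊓ s') t N w := by
  obtain ⟨u, hu, hsu⟩ := hs
  refine ⟨u, hu, ?_⟩
  calc (s ⊓ s') u - w u ≤ s u - w u := sub_le_sub_right inf_le_left _
    _ ≤ s t := hsu
    _ = (s ⊓ s') t := (inf_eq_left.2 hle).symm

variable {V G ι : Type*} [AddCommGroup G] [LinearOrder G] [IsOrderedAddMonoid G]
  {tail : ι → V} {heads : ι → Set V} {w : ι → V → G}

lemma exists_satisfies_union {B₁ B₂ : Set ι} (x : V)
    (hB : ∀ k, tail k ≠ x → (k ∈ B₁ ↔ k ∈ B₂))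
    (h₁ : ∃ s : V → G, ∀ k ∈ B₁, Satisfies s (tail k) (heads k) (w k))
    (h₂ : ∃ s : V → G, ∀ k ∈ B₂, Satisfies s (tail k) (heads k) (w k)) :
    ∃ s : V → G, ∀ k ∈ B₁ ∪ B₂, Satisfies s (tail k) (heads k) (w k) := by
  obtain ⟨s₁, hs₁⟩ := h₁
  obtain ⟨s₂, hs₂⟩ := h₂
  let r₁ : V → G := fun y => s₁ y - s₁ x
  let r₂ : V → G := fun y => s₂ y - s₂ x
  have from₁ : ∀ k ∈ B₁, r₁ (tail k) ≤ r₂ (tail k) →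
      Satisfies (r₁ ⊓ r₂) (tail k) (heads k) (w k) :=
    fun k hk hle => ((hs₁ k hk).sub_const _).inf_of_le hle
  have from₂ : ∀ k ∈ B₂, r₂ (tail k) ≤ r₁ (tail k) →
      Satisfies (r₁ ⊓ r₂) (tail k) (heads k) (w k) :=
    fun k hk hle => inf_comm r₂ r₁ ▸ ((hs₂ k hk).sub_const _).inf_of_le hle
  refine ⟨r₁ ⊓ r₂, fun k hk => ?_⟩
  by_cases hkx : tail k = x
  · have heq : r₁ (tail k) = r₂ (tail k) := by simp only [r₁, r₂, hkx, sub_self]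
    exact hk.elim (from₁ k · heq.le) (from₂ k · heq.ge)
  · obtain ⟨hk₁, hk₂⟩ : k ∈ B₁ ∧ k ∈ B₂ := by simpa [hB k hkx] using hk
    exact (le_total _ _).elim (from₁ k hk₁) (from₂ k hk₂)

lemma exists_satisfies_of_forall_leftInvOn [Finite ι]
    (h : ∀ (C : Set ι) (a : V → ι), LeftInvOn a tail C →
      ∃ s : V → G, ∀ k ∈ C, Satisfies s (tail k) (heads k) (w k))
    (B : Set ι) : ∃ s : V → G, ∀ k ∈ B, Satisfies s (tail k) (heads k) (w k) := by
  cases isEmpty_or_nonempty ι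
  · exact ⟨0, isEmptyElim⟩
  induction B using WellFoundedLT.induction with
  | ind B ih =>
  by_cases hinj : B.InjOn tail
  · exact h B _ hinj.leftInvOn_invFunOn
  · obtain ⟨i, hi, j, hj, hij, hne⟩ : ∃ i ∈ B, ∃ j ∈ B, tail i = tail j ∧ i ≠ j := by
      simpa [InjOn] using hinj
    have hunion : B \ {i} ∪ B \ {j} = B := by
      rw [← sdiff_inter, (disjoint_singleton.2 hne).inter_eq, sdiff_empty]
    rw [← hunion]
    refine exists_satisfies_union (tail i) (fun k hk => ?_)
      (ih _ (sdiff_singleton_ssubset.2 hi)) (ih _ (sdiff_singleton_ssubset.2 hj))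
    have hki : k ≠ i := ne_of_apply_ne tail hk
    have hkj : k ≠ j := ne_of_apply_ne tail (hij ▸ hk)
    simp [hki, hkj]

end SharedTails

section Selection

variable {V G ι : Type*} {tail : ι → V} {heads : ι → Set V} {S : Set V} {a : V → ι}

lemma mem_iff_exists_mem_image_of_closed (hta : ∀ x ∈ S, tail (a x) = x)
    (hS : ∀ x ∈ S, heads (a x) ⊆ S) (x : V) :
    x ∈ S ↔ ∃ i ∈ a '' S, x = tail i ∨ x ∈ heads i := by
  constructor
  · exact fun hx => ⟨a x, mem_image_of_mem a hx, Or.inl (hta x hx).symm⟩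
  · rintro ⟨_, ⟨y, hy, rfl⟩, rfl | hx⟩
    · rwa [hta y hy]
    · exact hS y hy hx

lemma exists_satisfies_of_forall_closed [Finite V] [Finite ι]
    [AddCommGroup G] [LinearOrder G] [IsOrderedAddMonoid G] {w : ι → V → G}
    (hcyc : ∀ (S : Set V) (a : V → ι), S.Nonempty → (∀ x ∈ S, tail (a x) = x) →
      (∀ x ∈ S, heads (a x) ⊆ S) → ∃ p v, IsCyclicSeq (fun x => heads (a x)) p v ∧ v 0 ∈ S ∧
        0 ≤ ∑ t ∈ Finset.range p, w (a (v t)) (v (t + 1))) :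
    ∃ s : V → G, ∀ i, Satisfies s (tail i) (heads i) (w i) := by
  suffices h : ∀ (C : Set ι) (a : V → ι), LeftInvOn a tail C →
      ∃ s : V → G, ∀ i ∈ C, Satisfies s (tail i) (heads i) (w i) by
    obtain ⟨s, hs⟩ := exists_satisfies_of_forall_leftInvOn h univ
    exact ⟨s, fun i => hs i (mem_univ i)⟩
  intro C a ha
  have hta : ∀ x ∈ tail '' C, tail (a x) = x :=
    forall_mem_image.2 fun i hi => congrArg tail (ha hi)
  obtain ⟨s, hs⟩ := exists_satisfies_of_exists_isCyclicSeq (c := fun x => w (a x))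
    fun S hSC hne hS => hcyc S a hne (fun x hx => hta x (hSC hx)) hS
  exact ⟨s, fun i hi => by simpa only [ha hi] using hs _ (mem_image_of_mem tail hi)⟩

end Selection

end HyTN

open HyTN in
theorem stmt_7_general {V ι G : Type*} [Finite V] [Finite ι]
    [AddCommGroup G] [LinearOrder G] [IsOrderedAddMonoid G]
    (tail : ι → V) (heads : ι → Finset V) (w : ι → V → G) (hne : ∀ i, (heads i).Nonempty) :
    (∃ s : V → G, ∀ i, (heads i).inf' (hne i) (fun u => s u - w i u) ≤ s (tail i)) ↔
    ¬ ∃ (S : Set V) (C : Set ι) (a : V → ι),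
      S.Nonempty ∧
      (∀ v : V, v ∈ S ↔ ∃ i ∈ C, v = tail i ∨ v ∈ heads i) ∧
      (∀ v ∈ S, a v ∈ C ∧ tail (a v) = v) ∧
      (∀ i ∈ C, a (tail i) = i) ∧
      (∀ (p : ℕ) (v : ℕ → V), 1 ≤ p → v 0 ∈ S →
        (∀ t < p, v (t + 1) ∈ heads (a (v t))) → v p = v 0 →
        (∀ t < p, ∀ t' < p, v t = v t' → t = t') →
        ∑ t ∈ Finset.range p, w (a (v t)) (v (t + 1)) < 0) := by
  simp only [Finset.inf'_le_iff]
  constructor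
  · rintro ⟨s, hs⟩ ⟨S, C, a, hSne, hS, ha, -, hneg⟩
    obtain ⟨p, v, hv, hv0, hsum⟩ := exists_isCyclicSeq_of_satisfies (s := s) (S := S)
      (N := fun x => heads (a x)) (c := fun x => w (a x))
      (fun x hx => by simpa only [Satisfies, (ha x hx).2] using! hs (a x)) hSne
      (fun x hx u hu => (hS u).2 ⟨a x, (ha x hx).1, Or.inr hu⟩)
    exact hsum.not_gt (hneg p v hv.pos hv0 hv.step hv.closed fun t ht t' ht' h => hv.injOn ht ht' h)
  · intro hcons
    refine exists_satisfies_of_forall_closed (heads := fun i => (heads i : Set V))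
      fun S a hSne hta hS => ?_
    by_contra! hneg
    exact hcons ⟨S, a '' S, a, hSne, mem_iff_exists_mem_image_of_closed hta hS,
      fun x hx => ⟨Set.mem_image_of_mem a hx, hta x hx⟩,
      Set.forall_mem_image.2 fun x hx => congrArg a (hta x hx),
      fun p v hp hv0 hstep hclosed hinj =>
        hneg p v ⟨hp, hstep, hclosed, fun t ht t' ht' h => hinj t ht t' ht' h⟩ hv0⟩

/-- A multi-head HyTN `H = (V, A)` (hyperarcs indexed by `ι`, each with tail
`tail i`, nonempty head set `heads i` not containing the tail, and real
weights `w i`) in which every node is the tail of at least one hyperarc is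
consistent (admits a feasible scheduling `s` with
`s (tail i) ≥ min_{u ∈ heads i} (s u - w i u)` for all `i`) iff it is
conservative, i.e. contains no negative cycle.  A cycle is a pair `(S, C)`
(with the tail-selection function `a` witnessing that every `v ∈ S` is the
tail of exactly one hyperarc `a v ∈ C`) with `S` nonempty and equal to the
union of `{tail i} ∪ heads i` over `i ∈ C`; it is negative when every finite
cyclic sequence `v 0, …, v p` in it has total weight `< 0`. -/
theorem stmt_7 {V ι : Type*} [Fintype V] [Fintype ι]
    (tail : ι → V) (heads : ι → Finset V) (w : ι → V → ℝ)
    (hne : ∀ i, (heads i).Nonempty) (hnt : ∀ i, tail i ∉ heads i)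
    (htail : ∀ v : V, ∃ i, tail i = v) :
    (∃ s : V → ℝ, ∀ i, (heads i).inf' (hne i) (fun u => s u - w i u) ≤ s (tail i)) ↔
    ¬ ∃ (S : Set V) (C : Set ι) (a : V → ι),
      S.Nonempty ∧
      (∀ v : V, v ∈ S ↔ ∃ i ∈ C, v = tail i ∨ v ∈ heads i) ∧
      (∀ v ∈ S, a v ∈ C ∧ tail (a v) = v) ∧
      (∀ i ∈ C, a (tail i) = i) ∧
      (∀ (p : ℕ) (v : ℕ → V), 1 ≤ p → v 0 ∈ S →
        (∀ t < p, v (t + 1) ∈ heads (a (v t))) → v p = v 0 →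
        (∀ t < p, ∀ t' < p, v t = v t' → t = t') →
        ∑ t ∈ Finset.range p, w (a (v t)) (v (t + 1)) < 0) :=
  stmt_7_general tail heads w hne
end

section
/- Let H = (V, A) be a multi-head HyTN. Suppose there exists a selection π assigning to every hyperarc A ∈ A a head π(A) ∈ H_A such that the weighted directed graph on V whose arcs are (t_A, π(A)) with weight w_A(π(A)), for A ∈ A, is conservative (every directed cycle has nonnegative total weight). Then H is consistent: any feasible potential p of this graph, restricted to V, is a feasible scheduling of H. (In game terms: if every node of the mean payoff game G_H is a winning start position for Player 1, then H is consistent.) -/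
/-!
The head selected by `π` already witnesses the minimum in the scheduling inequality, so a feasible
potential is a feasible scheduling, and it remains to find a feasible potential of a conservative
graph with finitely many arcs. A walk that repeats an arc contains a closed walk, which can be cut
out without increasing the weight. Hence every walk from `v` is at least as heavy as one of the
finitely many repetition-free walks from `v`, so there is a lightest walk from `v`, of weight `d v`
say. Prepending an arc to a walk gives `d (tail i) ≤ weight i + d (head i)`, i.e. `-d` is a feasible
potential. Since only finite minima are taken, the weights may lie in any linearly ordered abelian
group; integer weights thus have integer potentials.
-/

theorem exists_eq_append_cons_append_cons_of_not_nodup {α : Type*} {l : List α} (h : ¬ l.Nodup) :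
    ∃ a l₁ l₂ l₃, l = l₁ ++ (a :: l₂ ++ a :: l₃) := by
  obtain ⟨a, ha⟩ := List.exists_duplicate_iff_not_nodup.2 h
  obtain ⟨r₁, r₂, rfl, ha₁, ha₂⟩ := List.cons_sublist_iff.1 (List.duplicate_iff_sublist.1 ha)
  obtain ⟨l₁, m₁, rfl⟩ := List.append_of_mem ha₁
  obtain ⟨m₂, l₃, rfl⟩ := List.append_of_mem (List.singleton_sublist.1 ha₂)
  exact ⟨a, l₁, m₁ ++ m₂, l₃, by simp⟩

/-- A directed multigraph with vertices `V` and arcs labelled by `ι`, weighted in `G`. Arcs are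
labels rather than pairs of vertices, so parallel arcs are allowed; arc `i` goes from `tail i` to
`head i`. -/
structure WeightedDigraph (V ι G : Type*) where
  tail : ι → V
  head : ι → V
  weight : ι → G

namespace WeightedDigraph

variable {V ι G : Type*}

/-- `D.IsWalk u l v`: the arcs of `l`, in this order, form a walk from `u` to `v`. The list `[]` is
the walk of length zero from each vertex to itself. -/
def IsWalk (D : WeightedDigraph V ι G) : V → List ι → V → Prop
  | u, [], v => u = v
  | u, i :: l, v => D.tail i = u ∧ D.IsWalk (D.head i) l v

/-- The total weight of a list of arcs, counted with multiplicity. -/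
def walkWeight [AddMonoid G] (D : WeightedDigraph V ι G) (l : List ι) : G :=
  (l.map D.weight).sum

/-- Every directed cycle has nonnegative weight. A cycle of length `ℓ + 1` is a family of arcs
indexed by `ZMod (ℓ + 1)`, which may visit a vertex more than once. -/
def IsConservative [AddCommMonoid G] [LE G] (D : WeightedDigraph V ι G) : Prop :=
  ∀ (ℓ : ℕ) (c : ZMod (ℓ + 1) → ι),
    (∀ k, D.head (c k) = D.tail (c (k + 1))) → 0 ≤ ∑ k, D.weight (c k)

/-- A feasible potential: the arc weights reduced by `p`, which have the same total around every
cycle as the original ones, are nonnegative. -/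
def IsFeasiblePotential [AddGroup G] [LE G] (D : WeightedDigraph V ι G) (p : V → G) : Prop :=
  ∀ i, 0 ≤ D.weight i - p (D.head i) + p (D.tail i)

variable {D : WeightedDigraph V ι G} {u v : V} {l : List ι}

theorem isWalk_append {l₁ l₂ : List ι} :
    D.IsWalk u (l₁ ++ l₂) v ↔ ∃ m, D.IsWalk u l₁ m ∧ D.IsWalk m l₂ v := by
  induction l₁ generalizing u with
  | nil => simp [IsWalk]
  | cons i l₁ ih => simp [IsWalk, ih, and_assoc]

theorem IsWalk.map_tail_append_singleton (h : D.IsWalk u l v) :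
    l.map D.tail ++ [v] = u :: l.map D.head := by
  induction l generalizing u with
  | nil => simpa [IsWalk] using h.symm
  | cons i l ih => simp [ih h.2, h.1]

theorem IsWalk.map_head_eq_rotate_map_tail (h : D.IsWalk v l v) :
    l.map D.head = (l.map D.tail).rotate 1 := by
  cases l with
  | nil => rfl
  | cons i l => simpa [h.1] using h.map_tail_append_singleton.symm

@[simp]
theorem walkWeight_cons [AddMonoid G] (i : ι) (l : List ι) :
    D.walkWeight (i :: l) = D.weight i + D.walkWeight l := by
  simp [walkWeight]

@[simp]
theorem walkWeight_append [AddMonoid G] (l₁ l₂ : List ι) :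
    D.walkWeight (l₁ ++ l₂) = D.walkWeight l₁ + D.walkWeight l₂ := by
  simp [walkWeight]

theorem IsConservative.walkWeight_nonneg [AddCommMonoid G] [Preorder G] (hD : D.IsConservative)
    (h : D.IsWalk v l v) : 0 ≤ D.walkWeight l := by
  cases l with
  | nil => simp [walkWeight]
  | cons i l =>
    -- `ZMod (l.length + 1)` unfolds to `Fin (i :: l).length`.
    let c : Fin (i :: l).length → ι := (i :: l).get
    have head_eq_tail_succ (k : Fin (l.length + 1)) : D.head (c k) = D.tail (c (k + 1)) := by
      have hk := List.getElem_of_eq h.map_head_eq_rotate_map_tail (i := k)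
        (by simpa using k.is_le)
      simpa only [List.getElem_map, List.getElem_rotate, List.length_map, List.length_cons, c,
        List.get_eq_getElem, Fin.val_add, Fin.coe_ofNat_eq_mod, Nat.add_mod_mod] using hk
    calc
      0 ≤ ∑ k, D.weight (c k) := hD l.length c head_eq_tail_succ
      _ = D.walkWeight (i :: l) := Fin.sum_univ_fun_getElem (i :: l) D.weight

theorem IsConservative.exists_shorter_isWalk [AddCommMonoid G] [Preorder G] [IsOrderedAddMonoid G]
    (hD : D.IsConservative) (h : D.IsWalk u l v) (hl : ¬ l.Nodup) :
    ∃ l', l'.length < l.length ∧ D.IsWalk u l' v ∧ D.walkWeight l' ≤ D.walkWeight l := by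
  obtain ⟨i, l₁, l₂, l₃, rfl⟩ := exists_eq_append_cons_append_cons_of_not_nodup hl
  obtain ⟨m, h₁, h₂₃⟩ := isWalk_append.1 h
  obtain ⟨m', h₂, h₃⟩ := isWalk_append.1 h₂₃
  obtain rfl : D.tail i = m := h₂.1
  obtain rfl : D.tail i = m' := h₃.1
  refine ⟨l₁ ++ i :: l₃, by simp, isWalk_append.2 ⟨_, h₁, h₃⟩, ?_⟩
  rw [walkWeight_append, walkWeight_append, walkWeight_append]
  gcongr
  exact le_add_of_nonneg_left (hD.walkWeight_nonneg h₂)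

theorem IsConservative.exists_nodup_isWalk [AddCommMonoid G] [Preorder G] [IsOrderedAddMonoid G]
    {l : List ι} (hD : D.IsConservative) (h : D.IsWalk u l v) :
    ∃ l', l'.Nodup ∧ D.IsWalk u l' v ∧ D.walkWeight l' ≤ D.walkWeight l := by
  by_cases hl : l.Nodup
  · exact ⟨l, hl, h, le_rfl⟩
  · obtain ⟨l₁, _, h₁, hle₁⟩ := hD.exists_shorter_isWalk h hl
    obtain ⟨l₂, hl₂, h₂, hle₂⟩ := hD.exists_nodup_isWalk h₁
    exact ⟨l₂, hl₂, h₂, hle₂.trans hle₁⟩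
termination_by l.length

theorem IsConservative.exists_lightest_isWalk [Finite ι] [AddCommMonoid G] [LinearOrder G]
    [IsOrderedAddMonoid G] (hD : D.IsConservative) (u : V) :
    ∃ l, (∃ v, D.IsWalk u l v) ∧ ∀ l' v', D.IsWalk u l' v' → D.walkWeight l ≤ D.walkWeight l' := by
  have := Fintype.ofFinite ι
  have finite_nodup : {l : List ι | l.Nodup}.Finite :=
    Set.finite_coe_iff.1 (inferInstanceAs (Finite {l : List ι // l.Nodup}))
  obtain ⟨l, ⟨-, hl⟩, hmin⟩ := Set.exists_min_image {l | l.Nodup ∧ ∃ v, D.IsWalk u l v}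
    D.walkWeight (finite_nodup.subset fun _ h => h.1) ⟨[], List.nodup_nil, u, rfl⟩
  refine ⟨l, hl, fun l' v' h' => ?_⟩
  obtain ⟨l'', hnodup, h'', hle⟩ := hD.exists_nodup_isWalk h'
  exact (hmin l'' ⟨hnodup, v', h''⟩).trans hle

theorem IsConservative.exists_isFeasiblePotential [Finite ι] [AddCommGroup G] [LinearOrder G]
    [IsOrderedAddMonoid G] (hD : D.IsConservative) : ∃ p, D.IsFeasiblePotential p := by
  choose l hl hmin using hD.exists_lightest_isWalk
  refine ⟨fun v => -D.walkWeight (l v), fun i => ?_⟩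
  obtain ⟨v, hv⟩ := hl (D.head i)
  have hle : D.walkWeight (l (D.tail i)) ≤ D.weight i + D.walkWeight (l (D.head i)) := by
    simpa only [walkWeight_cons] using hmin (D.tail i) (i :: l (D.head i)) v ⟨rfl, hv⟩
  simpa only [sub_neg_eq_add, ← sub_eq_add_neg, sub_nonneg] using hle

end WeightedDigraph

theorem stmt_10_general {V ι G : Type*} [Finite ι] [AddCommGroup G] [LinearOrder G]
    [IsOrderedAddMonoid G] (tail : ι → V) (heads : ι → Finset V) (w : ι → V → G)
    (π : ι → V) (hπ : ∀ i, π i ∈ heads i)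
    (hcsv : ∀ (ℓ : ℕ) (c : ZMod (ℓ + 1) → ι),
      (∀ k, π (c k) = tail (c (k + 1))) → 0 ≤ ∑ k, w (c k) (π (c k))) :
    (∀ p : V → G, (∀ i, 0 ≤ w i (π i) - p (π i) + p (tail i)) →
      ∀ i, (heads i).inf' ⟨π i, hπ i⟩ (fun u => p u - w i u) ≤ p (tail i)) ∧
    (∃ s : V → G, ∀ i, (heads i).inf' ⟨π i, hπ i⟩ (fun u => s u - w i u) ≤ s (tail i)) := by
  let selected : WeightedDigraph V ι G := ⟨tail, π, fun i => w i (π i)⟩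
  have isScheduling (p : V → G) (hp : selected.IsFeasiblePotential p) (i : ι) :
      (heads i).inf' ⟨π i, hπ i⟩ (fun u => p u - w i u) ≤ p (tail i) :=
    calc
      _ ≤ p (π i) - w i (π i) := Finset.inf'_le _ (hπ i)
      _ ≤ p (tail i) := by
        rw [← sub_nonneg]
        convert hp i using 1
        simp only [selected]
        abel
  have hselected : selected.IsConservative := hcsv
  obtain ⟨p, hp⟩ := hselected.exists_isFeasiblePotential
  exact ⟨isScheduling, p, isScheduling p hp⟩

/-- Let `H = (V, A)` be a multi-head HyTN (hyperarcs indexed by `ι`, each with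
tail `tail i`, nonempty head set `heads i` not containing the tail, and real
weights `w i`), and suppose a selection `π` of one head per hyperarc is such
that the weighted directed graph on `V` with one arc `(tail i, π i)` of weight
`w i (π i)` per hyperarc is conservative (every directed cycle, encoded as a
cyclic sequence `c : ZMod (ℓ+1) → ι` of arc indices where the selected head of
each arc is the tail of the next, has nonnegative total weight).  Then every
feasible potential `p` of this graph is a feasible scheduling of `H`, and `H`
is consistent. -/
theorem stmt_10 {V ι : Type*} [Fintype V] [Fintype ι]
    (tail : ι → V) (heads : ι → Finset V) (w : ι → V → ℝ)
    (hne : ∀ i, (heads i).Nonempty) (hnt : ∀ i, tail i ∉ heads i)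
    (π : ι → V) (hπ : ∀ i, π i ∈ heads i)
    (hcsv : ∀ (ℓ : ℕ) (c : ZMod (ℓ + 1) → ι),
      (∀ k, π (c k) = tail (c (k + 1))) → 0 ≤ ∑ k, w (c k) (π (c k))) :
    (∀ p : V → ℝ, (∀ i, 0 ≤ w i (π i) - p (π i) + p (tail i)) →
      ∀ i, (heads i).inf' (hne i) (fun u => p u - w i u) ≤ p (tail i)) ∧
    (∃ s : V → ℝ, ∀ i, (heads i).inf' (hne i) (fun u => s u - w i u) ≤ s (tail i)) :=
  stmt_10_general tail heads w π hπ hcsv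
end

section
/- Let H = (V, A) be a multi-head HyTN and let v ∈ V be a sink node, i.e., no hyperarc of A has tail v. Let H_v be the multi-head HyTN obtained from H by removing the node v and every hyperarc having v among its heads. Then H is consistent if and only if H_v is consistent. -/
/-!
A scheduling of `H` and a scheduling of `H_v` differ only in the value at `v`. A hyperarc without
`v` among its heads does not see that value, because its tail is not `v` either. A hyperarc with
head `v` is satisfied through this head alone once `v` is scheduled early enough; since no hyperarc
has tail `v`, nothing bounds the value at `v` from below, and the finitely many upper bounds can be
met simultaneously.
-/

/-- A multi-head hyper temporal network with nodes `V`, hyperarcs indexed by `ι` and weights in `R`.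
The weight of a hyperarc is a total function on `V`, of which only the values on its heads matter;
the tail of a hyperarc may be one of its heads. -/
structure MultiHeadHyTN (V ι R : Type*) where
  tail : ι → V
  heads : ι → Finset V
  weight : ι → V → R
  heads_nonempty : ∀ i, (heads i).Nonempty

namespace MultiHeadHyTN

variable {V ι R : Type*}

section Feasibility

variable [Sub R]

/-- Feasibility of a scheduling `s`, which assigns an execution time to every node. -/
def IsFeasible [SemilatticeInf R] (H : MultiHeadHyTN V ι R) (s : V → R) : Prop :=
  ∀ i, (H.heads i).inf' (H.heads_nonempty i) (fun u => s u - H.weight i u) ≤ s (H.tail i)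

/-- Consistency of a network: the existence of a feasible scheduling. -/
def IsConsistent [SemilatticeInf R] (H : MultiHeadHyTN V ι R) : Prop :=
  ∃ s : V → R, H.IsFeasible s

theorem isFeasible_iff_exists_head [LinearOrder R] {H : MultiHeadHyTN V ι R} {s : V → R} :
    H.IsFeasible s ↔ ∀ i, ∃ u ∈ H.heads i, s u - H.weight i u ≤ s (H.tail i) :=
  forall_congr' fun _ => Finset.inf'_le_iff ..

end Feasibility

variable [DecidableEq V]

/-- The network `H_v` obtained by removing a sink node `v` and every hyperarc with `v` among its
heads. The remaining nodes and hyperarcs are subtypes of those of `H`. -/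
def removeSink (H : MultiHeadHyTN V ι R) (v : V) (hsink : ∀ i, H.tail i ≠ v) :
    MultiHeadHyTN {u : V // u ≠ v} {i : ι // v ∉ H.heads i} R where
  tail i := ⟨H.tail i.1, hsink i.1⟩
  heads i := (H.heads i.1).subtype (· ≠ v)
  weight i u := H.weight i.1 u.1
  heads_nonempty i :=
    let ⟨u, hu⟩ := H.heads_nonempty i.1
    ⟨⟨u, ne_of_mem_of_not_mem hu i.2⟩, Finset.mem_subtype.mpr hu⟩

variable [LinearOrder R] {H : MultiHeadHyTN V ι R} {v : V} {hsink : ∀ i, H.tail i ≠ v}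

theorem IsFeasible.restrict_removeSink [Sub R] {s : V → R} (hs : H.IsFeasible s) :
    (H.removeSink v hsink).IsFeasible fun u => s u := by
  refine isFeasible_iff_exists_head.mpr fun i => ?_
  obtain ⟨u, hu, hle⟩ := isFeasible_iff_exists_head.mp hs i.1
  exact ⟨⟨u, ne_of_mem_of_not_mem hu i.2⟩, Finset.mem_subtype.mpr hu, hle⟩

variable [AddGroup R] [AddRightMono R]

theorem IsFeasible.extend_removeSink {s : {u : V // u ≠ v} → R} {c : R}
    (hs : (H.removeSink v hsink).IsFeasible s)
    (hc : ∀ i, v ∈ H.heads i → c ≤ s ⟨H.tail i, hsink i⟩ + H.weight i v) :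
    H.IsFeasible fun u => if h : u = v then c else s ⟨u, h⟩ := by
  refine isFeasible_iff_exists_head.mpr fun i => ?_
  by_cases hv : v ∈ H.heads i
  · refine ⟨v, hv, ?_⟩
    simpa only [dif_pos, dif_neg (hsink i)] using sub_le_iff_le_add.mpr (hc i hv)
  · obtain ⟨u, hu, hle⟩ := isFeasible_iff_exists_head.mp hs ⟨i, hv⟩
    refine ⟨u, Finset.mem_subtype.mp hu, ?_⟩
    simpa only [removeSink, dif_neg u.2, dif_neg (hsink i)] using hle

theorem IsConsistent.of_removeSink (hfin : {i | v ∈ H.heads i}.Finite)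
    (h : (H.removeSink v hsink).IsConsistent) : H.IsConsistent := by
  obtain ⟨s, hs⟩ := h
  obtain ⟨c, hc⟩ := (hfin.image fun i => s ⟨H.tail i, hsink i⟩ + H.weight i v).bddBelow
  exact ⟨_, hs.extend_removeSink fun i hi => hc (Set.mem_image_of_mem _ hi)⟩

end MultiHeadHyTN

theorem stmt_12_general {V ι R : Type*} [DecidableEq V] [LinearOrder R] [AddGroup R]
    [AddRightMono R] (H : MultiHeadHyTN V ι R) (v : V) (hsink : ∀ i, H.tail i ≠ v)
    (hfin : {i | v ∈ H.heads i}.Finite) :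
    H.IsConsistent ↔ (H.removeSink v hsink).IsConsistent :=
  ⟨fun ⟨_, hs⟩ => ⟨_, hs.restrict_removeSink⟩, fun h => h.of_removeSink hfin⟩

/-- Let `H = (V, A)` be a multi-head HyTN (hyperarcs indexed by `ι`, each with
tail `tail i`, nonempty head set `heads i` not containing the tail, and real
weights `w i`) and let `v` be a sink node (no hyperarc has tail `v`).  Let
`H_v` be the HyTN obtained by removing the node `v` (nodes become the subtype
`{u // u ≠ v}`) and every hyperarc having `v` among its heads (hyperarcs
become the subtype `{i // v ∉ heads i}`, with head sets restricted to the new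
node set).  Then `H` is consistent iff `H_v` is consistent. -/
theorem stmt_12 {V ι : Type*} [Fintype V] [Fintype ι] [DecidableEq V]
    (tail : ι → V) (heads : ι → Finset V) (w : ι → V → ℝ)
    (hne : ∀ i, (heads i).Nonempty) (hnt : ∀ i, tail i ∉ heads i)
    (v : V) (hsink : ∀ i, tail i ≠ v) :
    (∃ s : V → ℝ, ∀ i, (heads i).inf' (hne i) (fun u => s u - w i u) ≤ s (tail i)) ↔
    (∃ s : {u : V // u ≠ v} → ℝ, ∀ i : {i : ι // v ∉ heads i},
      ((heads i.1).subtype (· ≠ v)).inf'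
          (by
            obtain ⟨u, hu⟩ := hne i.1
            exact ⟨⟨u, fun h => i.2 (h ▸ hu)⟩, Finset.mem_subtype.mpr hu⟩)
          (fun u => s u - w i.1 u.1) ≤ s ⟨tail i.1, hsink i.1⟩) :=
  stmt_12_general ⟨tail, heads, w, hne⟩ v hsink (Set.toFinite _)
end
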